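/- For all integers m, t, n ≥ 1, every red/blue edge-coloring of the complete graph on {1,…,N}, where N = (R(K_t,K_n) − 1)·m + 1, contains a blue clique of size n or a red t-clique chain consisting of m cliques. -/

import Mathlib

/-- `χ i j` is the color of the edge `{i, j}` for `i < j`: `true` = red, `false` = blue.
The classical Ramsey property: every red/blue coloring of `K_N` contains a red `K_s`
or a blue `K_n`. -/
def HasRamseyProp (s n N : ℕ) : Prop :=
  ∀ χ : Fin N → Fin N → Bool,
    (∃ f : Fin s → Fin N, StrictMono f ∧ ∀ i j : Fin s, i < j → χ (f i) (f j) = true) ∨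
    (∃ f : Fin n → Fin N, StrictMono f ∧ ∀ i j : Fin n, i < j → χ (f i) (f j) = false)

/-- The classical Ramsey number `R(K_s, K_n)`. -/
noncomputable def ramsey (s n : ℕ) : ℕ := sInf {N | HasRamseyProp s n N}

/-- A `b`-monochromatic `t`-clique chain with `m` cliques: cliques `X_0, …, X_{m−1}`,
each of size `t`, all of whose internal edges have color `b`, such that consecutive
cliques intersect in exactly one vertex, which is the largest element of the earlier
clique and the smallest element of the later one. -/
def IsCliqueChain {N : ℕ} (χ : Fin N → Fin N → Bool) (b : Bool) (t m : ℕ)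
    (X : Fin m → Finset (Fin N)) : Prop :=
  (∀ i : Fin m, (X i).card = t) ∧
  (∀ i : Fin m, ∀ a ∈ X i, ∀ c ∈ X i, a < c → χ a c = b) ∧
  (∀ (i : ℕ) (h1 : i < m) (h2 : i + 1 < m),
    (X ⟨i, h1⟩ ∩ X ⟨i + 1, h2⟩).card = 1 ∧
    ∃ z : Fin N, z ∈ X ⟨i, h1⟩ ∧ z ∈ X ⟨i + 1, h2⟩ ∧
      (∀ a ∈ X ⟨i, h1⟩, a ≤ z) ∧ (∀ c ∈ X ⟨i + 1, h2⟩, z ≤ c))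

/-! Link `u` to `v` when some red `t`-clique has least element `u` and greatest element `v`, so that
red `t`-clique chains correspond to walks of this relation. If there is no blue `n`-clique, then
every set of at least `R(K_t, K_n)` vertices contains a linked pair. Let `A k` be the set of
endpoints of walks of length `k`. No vertex of `A k \ A (k + 1)` has a link from `A k`, so this
difference has at most `R(K_t, K_n) - 1` elements. Hence passing from `A k` to `A (k + 1)` loses at
most `R(K_t, K_n) - 1` vertices, and `A m` is nonempty. -/

open Finset

section Monochromatic

variable {α κ : Type*}

/-- A clique `S` of color `b` in an edge-coloring `χ` of the complete graph on an ordered set, where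
the color of an edge is read off from its increasing orientation. -/
def IsMonochromatic [LT α] (χ : α → α → κ) (b : κ) (S : Finset α) : Prop :=
  ∀ a ∈ S, ∀ c ∈ S, a < c → χ a c = b

variable {χ : α → α → κ} {b : κ}

theorem isMonochromatic_empty [LT α] : IsMonochromatic χ b ∅ := by
  simp [IsMonochromatic]

theorem IsMonochromatic.insert [Preorder α] [DecidableEq α] {T : Finset α} {v : α}
    (hT : IsMonochromatic χ b T) (hv : ∀ x ∈ T, v < x ∧ χ v x = b) :
    IsMonochromatic χ b (insert v T) := by
  intro a ha c hc hac
  rcases mem_insert.mp ha with rfl | haT <;> rcases mem_insert.mp hc with rfl | hcT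
  · exact absurd hac (lt_irrefl _)
  · exact (hv c hcT).2
  · exact absurd hac (hv a haT).1.not_gt
  · exact hT a haT c hcT hac

theorem exists_isMonochromatic_card_iff_exists_strictMono [LinearOrder α] {k : ℕ} :
    (∃ T : Finset α, #T = k ∧ IsMonochromatic χ b T) ↔
      ∃ f : Fin k → α, StrictMono f ∧ ∀ i j, i < j → χ (f i) (f j) = b := by
  constructor
  · rintro ⟨T, hcard, hT⟩
    let e := T.orderEmbOfFin hcard
    exact ⟨e, e.strictMono, fun i j hij =>
      hT _ (T.orderEmbOfFin_mem hcard i) _ (T.orderEmbOfFin_mem hcard j) (e.strictMono hij)⟩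
  · rintro ⟨f, hf, hcol⟩
    refine ⟨univ.map ⟨f, hf.injective⟩, by simp, ?_⟩
    simpa [IsMonochromatic, hf.lt_iff_lt] using hcol

theorem exists_isMonochromatic_card_succ [PartialOrder α] [DecidableEq α] [DecidableEq κ]
    {S T : Finset α} {v : α} (hv : IsLeast (S : Set α) v)
    (hTS : T ⊆ {x ∈ S.erase v | χ v x = b}) (hT : IsMonochromatic χ b T) :
    ∃ T' ⊆ S, #T' = #T + 1 ∧ IsMonochromatic χ b T' := by
  have hmem : ∀ x ∈ T, (x ≠ v ∧ x ∈ S) ∧ χ v x = b := by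
    simpa only [subset_iff, mem_filter, mem_erase] using hTS
  refine ⟨insert v T, insert_subset hv.1 fun x hx => (hmem x hx).1.2,
    card_insert_of_notMem fun hvT => (hmem v hvT).1.1 rfl, hT.insert fun x hx => ?_⟩
  obtain ⟨⟨hne, hxS⟩, hcol⟩ := hmem x hx
  exact ⟨(hv.2 hxS).lt_of_ne hne.symm, hcol⟩

end Monochromatic

section Ramsey

variable {α : Type*} [LinearOrder α] {s n : ℕ}

theorem exists_isMonochromatic_of_choose_le_card (χ : α → α → Bool) {S : Finset α}
    (hS : (s + n).choose s ≤ #S) :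
    (∃ T ⊆ S, #T = s ∧ IsMonochromatic χ true T) ∨
      ∃ T ⊆ S, #T = n ∧ IsMonochromatic χ false T := by
  induction s generalizing n S with
  | zero => exact .inl ⟨∅, empty_subset S, card_empty, isMonochromatic_empty⟩
  | succ s ihs =>
    induction n generalizing S with
    | zero => exact .inr ⟨∅, empty_subset S, card_empty, isMonochromatic_empty⟩
    | succ n ihn =>
      have hne : S.Nonempty :=
        card_pos.mp ((Nat.choose_pos (Nat.le_add_right _ _)).trans_le hS)
      let v := S.min' hne
      have hv : IsLeast (S : Set α) v := S.isLeast_min' hne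
      let nbhd (b : Bool) : Finset α := {x ∈ S.erase v | χ v x = b}
      have hsub (b : Bool) : nbhd b ⊆ S := (filter_subset _ _).trans (erase_subset _ _)
      have hsum : #(nbhd true) + #(nbhd false) + 1 = #S := by
        have hsplit := card_filter_add_card_filter_not (s := S.erase v) (χ v · = true)
        simp only [Bool.not_eq_true] at hsplit
        rw [hsplit, card_erase_add_one hv.1]
      have hpascal : (s + 1 + (n + 1)).choose (s + 1) =
          (s + (n + 1)).choose s + (s + 1 + n).choose (s + 1) := by
        rw [show s + 1 + (n + 1) = s + (n + 1) + 1 by omega, Nat.choose_succ_succ',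
          show s + (n + 1) = s + 1 + n by omega]
      have hlarge : (s + (n + 1)).choose s ≤ #(nbhd true) ∨
          (s + 1 + n).choose (s + 1) ≤ #(nbhd false) := by
        omega
      rcases hlarge with hred | hblue
      · rcases ihs hred with ⟨T, hTS, rfl, hT⟩ | ⟨T, hTS, hcard, hT⟩
        · exact .inl (exists_isMonochromatic_card_succ hv hTS hT)
        · exact .inr ⟨T, hTS.trans (hsub true), hcard, hT⟩
      · rcases ihn hblue with ⟨T, hTS, hcard, hT⟩ | ⟨T, hTS, rfl, hT⟩
        · exact .inl ⟨T, hTS.trans (hsub false), hcard, hT⟩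
        · exact .inr (exists_isMonochromatic_card_succ hv hTS hT)

theorem hasRamseyProp_choose (s n : ℕ) : HasRamseyProp s n ((s + n).choose s) := by
  intro χ
  refine (exists_isMonochromatic_of_choose_le_card χ (S := univ) (card_fin _).ge).imp ?_ ?_ <;>
  · rintro ⟨T, -, hT⟩
    exact exists_isMonochromatic_card_iff_exists_strictMono.mp ⟨T, hT⟩

theorem hasRamseyProp_ramsey (s n : ℕ) : HasRamseyProp s n (ramsey s n) :=
  Nat.sInf_mem (s := {N | HasRamseyProp s n N}) ⟨_, hasRamseyProp_choose s n⟩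

theorem HasRamseyProp.exists_isMonochromatic_subset {N : ℕ} (h : HasRamseyProp s n N)
    (χ : α → α → Bool) {S : Finset α} (hS : N ≤ #S) :
    (∃ T ⊆ S, #T = s ∧ IsMonochromatic χ true T) ∨
      ∃ T ⊆ S, #T = n ∧ IsMonochromatic χ false T := by
  let e := S.orderEmbOfCardLe hS
  have himage {b : Bool} {k : ℕ} : (∃ f : Fin k → Fin N, StrictMono f ∧
      ∀ i j, i < j → χ (e (f i)) (e (f j)) = b) → ∃ T ⊆ S, #T = k ∧ IsMonochromatic χ b T := by
    intro hf
    obtain ⟨T, hcard, hT⟩ := exists_isMonochromatic_card_iff_exists_strictMono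
      (χ := fun i j => χ (e i) (e j)).mpr hf
    refine ⟨T.map e.toEmbedding, ?_, by rwa [card_map], by simpa [IsMonochromatic] using hT⟩
    simp [subset_iff, e, orderEmbOfCardLe_mem]
  exact (h fun i j => χ (e i) (e j)).imp himage himage

end Ramsey

section RelSeries

variable {α : Type*} [Fintype α] {r : SetRel α α} {d : ℕ}

open scoped Classical in
/-- The set `A k` of the endpoints of the walks of length `k` of a relation `r` on a finite type,
whose size is bounded from below by induction on `k`. -/
noncomputable def relSeriesEndpoints (r : SetRel α α) (k : ℕ) : Finset α :=
  {v | ∃ p : RelSeries r, p.length = k ∧ p.last = v}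

theorem mem_relSeriesEndpoints {k : ℕ} {v : α} :
    v ∈ relSeriesEndpoints r k ↔ ∃ p : RelSeries r, p.length = k ∧ p.last = v := by
  simp [relSeriesEndpoints]

theorem relSeriesEndpoints_zero : relSeriesEndpoints r 0 = univ :=
  eq_univ_of_forall fun v => mem_relSeriesEndpoints.mpr ⟨.singleton r v, rfl, rfl⟩

theorem mem_relSeriesEndpoints_succ {k : ℕ} {u v : α} (hu : u ∈ relSeriesEndpoints r k)
    (huv : (u, v) ∈ r) : v ∈ relSeriesEndpoints r (k + 1) := by
  obtain ⟨p, rfl, rfl⟩ := mem_relSeriesEndpoints.mp hu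
  exact mem_relSeriesEndpoints.mpr ⟨p.snoc v huv, rfl, p.last_snoc v huv⟩

theorem card_relSeriesEndpoints_le_succ_add
    (hr : ∀ T : Finset α, d < #T → ∃ u ∈ T, ∃ v ∈ T, (u, v) ∈ r) (k : ℕ) :
    #(relSeriesEndpoints r k) ≤ #(relSeriesEndpoints r (k + 1)) + d := by
  classical
  have hsdiff : #(relSeriesEndpoints r k \ relSeriesEndpoints r (k + 1)) ≤ d := by
    by_contra! hlt
    obtain ⟨u, hu, v, hv, huv⟩ := hr _ hlt
    exact (mem_sdiff.mp hv).2 (mem_relSeriesEndpoints_succ (mem_sdiff.mp hu).1 huv)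
  have hcard := card_le_card_sdiff_add_card (s := relSeriesEndpoints r k)
    (t := relSeriesEndpoints r (k + 1))
  omega

theorem card_le_card_relSeriesEndpoints_add
    (hr : ∀ T : Finset α, d < #T → ∃ u ∈ T, ∃ v ∈ T, (u, v) ∈ r) (k : ℕ) :
    Fintype.card α ≤ #(relSeriesEndpoints r k) + d * k := by
  induction k with
  | zero => simp [relSeriesEndpoints_zero]
  | succ k ih =>
    have hstep := card_relSeriesEndpoints_le_succ_add hr k
    rw [Nat.mul_succ]
    omega

theorem exists_relSeries_length_eq
    (hr : ∀ T : Finset α, d < #T → ∃ u ∈ T, ∃ v ∈ T, (u, v) ∈ r) {m : ℕ}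
    (hcard : d * m < Fintype.card α) : ∃ p : RelSeries r, p.length = m := by
  have hpos : 0 < #(relSeriesEndpoints r m) := by
    have hle := card_le_card_relSeriesEndpoints_add hr m
    omega
  obtain ⟨v, hv⟩ := card_pos.mp hpos
  obtain ⟨p, hlength, -⟩ := mem_relSeriesEndpoints.mp hv
  exact ⟨p, hlength⟩

end RelSeries

section CliqueChain

variable {α κ : Type*}

/-- The relation linking `u` to `v` when they are the least and the greatest element of a `t`-clique
of color `b`. For `t = 1` every vertex is linked to itself. -/
def cliqueLink [Preorder α] (χ : α → α → κ) (b : κ) (t : ℕ) : SetRel α α :=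
  {(u, v) | ∃ Y : Finset α, #Y = t ∧ IsMonochromatic χ b Y ∧
    IsLeast (Y : Set α) u ∧ IsGreatest (Y : Set α) v}

theorem IsMonochromatic.exists_mem_cliqueLink [LinearOrder α] {χ : α → α → κ} {b : κ}
    {Y : Finset α} (hY : IsMonochromatic χ b Y) (hne : Y.Nonempty) :
    ∃ u ∈ Y, ∃ v ∈ Y, (u, v) ∈ cliqueLink χ b #Y :=
  ⟨Y.min' hne, Y.min'_mem hne, Y.max' hne, Y.max'_mem hne,
    Y, rfl, hY, Y.isLeast_min' hne, Y.isGreatest_max' hne⟩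

theorem inter_eq_singleton_of_isGreatest_of_isLeast [PartialOrder α] [DecidableEq α]
    {X Y : Finset α} {z : α} (hX : IsGreatest (X : Set α) z) (hY : IsLeast (Y : Set α) z) :
    X ∩ Y = {z} := by
  ext x
  rw [mem_inter, mem_singleton]
  constructor
  · rintro ⟨hxX, hxY⟩
    exact (hX.2 hxX).antisymm (hY.2 hxY)
  · rintro rfl
    exact ⟨hX.1, hY.1⟩

theorem exists_isCliqueChain_of_relSeries {N t : ℕ} {χ : Fin N → Fin N → Bool} {b : Bool}
    (p : RelSeries (cliqueLink χ b t)) :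
    ∃ X : Fin p.length → Finset (Fin N), IsCliqueChain χ b t p.length X := by
  choose X hcard hmono hleast hgreatest using p.step
  refine ⟨X, hcard, hmono, fun i h₁ h₂ => ?_⟩
  have hmax := hgreatest ⟨i, h₁⟩
  have hmin : IsLeast (X ⟨i + 1, h₂⟩ : Set (Fin N)) (p (Fin.succ ⟨i, h₁⟩)) := hleast ⟨i + 1, h₂⟩
  exact ⟨card_eq_one.mpr ⟨_, inter_eq_singleton_of_isGreatest_of_isLeast hmax hmin⟩,
    _, hmax.1, hmin.1, hmax.2, hmin.2⟩

end CliqueChain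

/-- for `m, t, n ≥ 1`, every red/blue edge-coloring of `K_N` with
`N = (R(K_t,K_n) − 1)·m + 1` contains a blue clique of size `n` or a red `t`-clique
chain of `m` cliques. -/
theorem stmt13 (m t n N : ℕ) (hm : 1 ≤ m) (ht : 1 ≤ t) (hn : 1 ≤ n)
    (hN : N = (ramsey t n - 1) * m + 1) (χ : Fin N → Fin N → Bool) :
    (∃ f : Fin n → Fin N, StrictMono f ∧ ∀ i j : Fin n, i < j → χ (f i) (f j) = false) ∨
    (∃ X : Fin m → Finset (Fin N), IsCliqueChain χ true t m X) := by
  by_cases hblue : ∃ T : Finset (Fin N), #T = n ∧ IsMonochromatic χ false T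
  · exact .inl (exists_isMonochromatic_card_iff_exists_strictMono.mp hblue)
  right
  have hlink : ∀ T : Finset (Fin N), ramsey t n - 1 < #T →
      ∃ u ∈ T, ∃ v ∈ T, (u, v) ∈ cliqueLink χ true t := by
    intro T hT
    rcases (hasRamseyProp_ramsey t n).exists_isMonochromatic_subset χ (Nat.le_of_pred_lt hT) with
      ⟨Y, hYT, rfl, hred⟩ | ⟨Y, -, hY⟩
    · obtain ⟨u, hu, v, hv, huv⟩ := hred.exists_mem_cliqueLink (card_pos.mp ht)
      exact ⟨u, hYT hu, v, hYT hv, huv⟩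
    · exact absurd ⟨Y, hY⟩ hblue
  have hcard : (ramsey t n - 1) * m < Fintype.card (Fin N) := by
    rw [Fintype.card_fin, hN]
    exact Nat.lt_succ_self _
  obtain ⟨p, rfl⟩ := exists_relSeries_length_eq hlink hcard
  exact exists_isCliqueChain_of_relSeries p
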